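/- In the setting of stopping rules for a finite-state discrete-time Markov chain [see context], let K^p : {0,…,N} → ℝ and F ∈ ℝ, and define the reward g : {0,…,N} → ℝ by g(n) := K^p(n) for n < N and g(N) := max(F, K^p(N)). Define V : {0,…,N} × {1,…,m} → ℝ backward by V(N, x) := max(F, K^p(N)) and V(n, x) := max( K^p(n), ∑_{y=1}^{m} (P_{n+1})_{x,y} · γ_y · V(n+1, y) ) for 0 ≤ n < N. Then V(0, j) is the greatest element of the set { Val(τ) : τ an adapted stopping rule }: Val(τ) ≤ V(0, j) for every adapted stopping rule τ, and there exists an adapted stopping rule τ* with Val(τ*) = V(0, j). -/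

import Mathlib

open Matrix

/-- The path `(w_0, w_1, …, w_N)` started at `j` determined by the choices `(w_1, …, w_N)`. -/
def seqFrom {m N : ℕ} (j : Fin m) (w : Fin N → Fin m) : Fin (N + 1) → Fin m :=
  Fin.cases j w

/-- Probability weight `wt(w) = ∏_{n=1}^N (P_n)_{w_{n−1} w_n}` of the path started at `j`
with choices `w` (the `n`-th step, 0-indexed `n-1`, uses `P (n-1)`). -/
noncomputable def pathWt {m N : ℕ} (j : Fin m) (P : ℕ → Matrix (Fin m) (Fin m) ℝ)
    (w : Fin N → Fin m) : ℝ :=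
  ∏ n : Fin N, P n.val (seqFrom j w n.castSucc) (seqFrom j w n.succ)

/-- A stopping rule `τ` (valued in `{0,…,N}`) is adapted: whether `τ ≤ n` only depends on
the path up to time `n`. -/
def AdaptedRule {m N : ℕ} (τ : (Fin N → Fin m) → ℕ) : Prop :=
  (∀ w, τ w ≤ N) ∧
    ∀ n : ℕ, ∀ w w' : Fin N → Fin m,
      (∀ i : Fin N, (i : ℕ) < n → w i = w' i) → (τ w ≤ n ↔ τ w' ≤ n)

/-- Discounted expected reward `Val(τ) = ∑_w wt(w) (∏_{i=1}^{τ(w)} γ_{w_i}) g(τ(w))`. -/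
noncomputable def ruleValue {m N : ℕ} (j : Fin m) (P : ℕ → Matrix (Fin m) (Fin m) ℝ)
    (γ : Fin m → ℝ) (g : ℕ → ℝ) (τ : (Fin N → Fin m) → ℕ) : ℝ :=
  ∑ w : Fin N → Fin m,
    pathWt j P w * (∏ i : Fin N, if (i : ℕ) < τ w then γ (w i) else 1) * g (τ w)

/-- Backward recursion for the putable bond: `snellPut q x = V(N − q, x)`, i.e.
`V(N, x) = max(F, K^p(N))` and
`V(n, x) = max(K^p(n), ∑_y (P_{n+1})_{x,y} γ_y V(n+1, y))` for `n < N`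
(0-indexed, the matrix used in the step from time `n` is `P n`). -/
noncomputable def snellPut {m : ℕ} (N : ℕ) (P : ℕ → Matrix (Fin m) (Fin m) ℝ)
    (γ : Fin m → ℝ) (Kp : ℕ → ℝ) (F : ℝ) : ℕ → Fin m → ℝ
  | 0, _ => max F (Kp N)
  | q + 1, x =>
      max (Kp (N - (q + 1)))
        (∑ y : Fin m, P (N - (q + 1)) x y * γ y * snellPut N P γ Kp F q y)

theorem pathWt_cons {m N : ℕ} (j y : Fin m) (P : ℕ → Matrix (Fin m) (Fin m) ℝ)
    (w : Fin N → Fin m) :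
    pathWt j P (Fin.cons y w : Fin (N + 1) → Fin m)
      = P 0 j y * pathWt y (fun n => P (n + 1)) w := by
  unfold pathWt
  rw [Fin.prod_univ_succ]
  congr 1

theorem sum_cons_split {m N : ℕ} (f : (Fin (N + 1) → Fin m) → ℝ) :
    ∑ w, f w = ∑ y : Fin m, ∑ w : Fin N → Fin m, f (Fin.cons y w) := by
  rw [← Fintype.sum_prod_type']
  exact (Equiv.sum_comp (Fin.consEquiv (fun _ : Fin (N + 1) => Fin m)) f).symm

theorem sum_pathWt {m : ℕ} (N : ℕ) : ∀ (j : Fin m) (P : ℕ → Matrix (Fin m) (Fin m) ℝ),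
    (∀ n < N, ∀ x : Fin m, ∑ y : Fin m, P n x y = 1) →
    ∑ w : Fin N → Fin m, pathWt j P w = 1 := by
  induction N with
  | zero => intro j P _; simp [pathWt]
  | succ N ih =>
    intro j P h
    rw [sum_cons_split]
    simp_rw [pathWt_cons, ← Finset.mul_sum]
    rw [← h 0 (by omega) j]
    refine Finset.sum_congr rfl fun y _ => ?_
    rw [ih y (fun n => P (n + 1)) (fun n hn => h (n + 1) (by omega)), mul_one]

theorem ruleValue_step {m N : ℕ} (j : Fin m) (P : ℕ → Matrix (Fin m) (Fin m) ℝ)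
    (γ : Fin m → ℝ) (g : ℕ → ℝ) (τ : (Fin (N + 1) → Fin m) → ℕ)
    (σ : Fin m → (Fin N → Fin m) → ℕ) (h : ∀ y w, τ (Fin.cons y w) = σ y w + 1) :
    ruleValue j P γ g τ = ∑ y : Fin m, P 0 j y * γ y *
      ruleValue y (fun n => P (n + 1)) γ (fun n => g (n + 1)) (σ y) := by
  unfold ruleValue
  rw [sum_cons_split]
  refine Finset.sum_congr rfl fun y _ => ?_
  rw [Finset.mul_sum]
  refine Finset.sum_congr rfl fun w _ => ?_
  rw [pathWt_cons, h, Fin.prod_univ_succ]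
  simp only [Fin.val_zero, Nat.succ_pos', if_true, Fin.cons_zero, Fin.cons_succ, Fin.val_succ,
    add_lt_add_iff_right]
  ring

theorem ruleValue_zero {m N : ℕ} (j : Fin m) (P : ℕ → Matrix (Fin m) (Fin m) ℝ)
    (hP : ∀ n < N, ∀ x : Fin m, ∑ y : Fin m, P n x y = 1)
    (γ : Fin m → ℝ) (g : ℕ → ℝ) (τ : (Fin N → Fin m) → ℕ) (h : ∀ w, τ w = 0) :
    ruleValue j P γ g τ = g 0 := by
  unfold ruleValue
  simp only [h, Nat.not_lt_zero, if_false, Finset.prod_const_one, mul_one]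
  rw [← Finset.sum_mul, sum_pathWt N j P hP, one_mul]

theorem snellPut_shift {m : ℕ} (N : ℕ) (P : ℕ → Matrix (Fin m) (Fin m) ℝ)
    (γ : Fin m → ℝ) (Kp : ℕ → ℝ) (F : ℝ) (q : ℕ) : q ≤ N → ∀ x,
    snellPut (N + 1) P γ Kp F q x
      = snellPut N (fun n => P (n + 1)) γ (fun n => Kp (n + 1)) F q x := by
  induction q with
  | zero => intro _ x; rfl
  | succ q ih =>
    intro hq x
    have e : N + 1 - (q + 1) = N - (q + 1) + 1 := by omega
    simp only [snellPut]
    rw [e]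
    simp only [ih (by omega)]

theorem putable_aux (m : ℕ) (γ : Fin m → ℝ) (hγ : ∀ i, 0 ≤ γ i) (F : ℝ) (N : ℕ) :
    ∀ (j : Fin m) (P : ℕ → Matrix (Fin m) (Fin m) ℝ)
    (_ : ∀ n < N, ∀ x y : Fin m, 0 ≤ P n x y)
    (_ : ∀ n < N, ∀ x : Fin m, ∑ y : Fin m, P n x y = 1)
    (Kp : ℕ → ℝ)
    (g : ℕ → ℝ) (_ : ∀ n, g n = if n < N then Kp n else max F (Kp N)),
    (∀ τ : (Fin N → Fin m) → ℕ, AdaptedRule τ →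
        ruleValue j P γ g τ ≤ snellPut N P γ Kp F N j) ∧
      (∃ τ : (Fin N → Fin m) → ℕ, AdaptedRule τ ∧
        ruleValue j P γ g τ = snellPut N P γ Kp F N j) := by
  induction N with
  | zero =>
    intro j P _ hP Kp g hg
    have key : ∀ τ : (Fin 0 → Fin m) → ℕ, (∀ w, τ w = 0) →
        ruleValue j P γ g τ = snellPut 0 P γ Kp F 0 j := by
      intro τ h
      rw [ruleValue_zero j P hP γ g τ h, hg]
      simp [snellPut]
    refine ⟨fun τ hτ => (key τ fun w => Nat.le_zero.mp (hτ.1 w)).le, fun _ => 0, ?_, ?_⟩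
    · exact ⟨fun _ => le_rfl, fun _ _ _ _ => Iff.rfl⟩
    · exact key _ fun _ => rfl
  | succ N ih =>
    intro j P hnn hP Kp g hg
    have IH := fun y => ih y (fun n => P (n + 1)) (fun n hn => hnn (n + 1) (by omega))
      (fun n hn => hP (n + 1) (by omega)) (fun n => Kp (n + 1)) (fun n => g (n + 1))
      (fun n => by simp [hg])
    have hV : snellPut (N + 1) P γ Kp F (N + 1) j = max (Kp 0) (∑ y : Fin m, P 0 j y * γ y *
        snellPut N (fun n => P (n + 1)) γ (fun n => Kp (n + 1)) F N y) := by
      simp only [snellPut, Nat.sub_self, snellPut_shift N P γ Kp F N le_rfl]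
    have hg0 : g 0 = Kp 0 := by simp [hg]
    rw [hV]
    constructor
    · intro τ hτ
      by_cases h0 : ∃ w, τ w = 0
      · obtain ⟨w0, h0⟩ := h0
        have hz : ∀ w, τ w = 0 := fun w =>
          Nat.le_zero.mp ((hτ.2 0 w0 w (fun i hi => absurd hi (Nat.not_lt_zero _))).mp h0.le)
        rw [ruleValue_zero j P hP γ g τ hz, hg0]
        exact le_max_left _ _
      · push Not at h0
        refine le_trans ?_ (le_max_right _ _)
        rw [ruleValue_step j P γ g τ (fun y w => τ (Fin.cons y w) - 1)
          (fun y w => by have := h0 (Fin.cons y w); omega)]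
        refine Finset.sum_le_sum fun y _ => ?_
        refine mul_le_mul_of_nonneg_left ((IH y).1 _ ⟨?_, ?_⟩)
          (mul_nonneg (hnn 0 (by omega) j y) (hγ y))
        · intro w
          have := hτ.1 (Fin.cons y w)
          beta_reduce
          omega
        · intro n w w' hw
          have := hτ.2 (n + 1) (Fin.cons y w) (Fin.cons y w') (by
            intro i
            refine Fin.cases ?_ (fun i => ?_) i
            · intro _; rfl
            · intro hi
              simp only [Fin.cons_succ]
              exact hw i (by simpa using hi))
          beta_reduce
          omega
    · rcases le_total (∑ y : Fin m, P 0 j y * γ y *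
        snellPut N (fun n => P (n + 1)) γ (fun n => Kp (n + 1)) F N y) (Kp 0) with h | h
      · refine ⟨fun _ => 0, ⟨fun _ => Nat.zero_le _, fun _ _ _ _ => Iff.rfl⟩, ?_⟩
        rw [max_eq_left h, ruleValue_zero j P hP γ g _ (fun _ => rfl), hg0]
      · choose σ hσ hval using fun y => (IH y).2
        refine ⟨fun w => σ (w 0) (Fin.tail w) + 1, ⟨?_, ?_⟩, ?_⟩
        · intro w
          have := (hσ (w 0)).1 (Fin.tail w)
          beta_reduce
          omega
        · intro n w w' hw
          cases n with
          | zero => simp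
          | succ n =>
            have e : w 0 = w' 0 := hw 0 (by simp)
            have := (hσ (w 0)).2 n (Fin.tail w) (Fin.tail w')
              (fun i hi => hw i.succ (by simpa using hi))
            simp only [add_le_add_iff_right, ← e]
            exact this
        · rw [max_eq_right h, ruleValue_step j P γ g _ σ (fun y w => by simp)]
          exact Finset.sum_congr rfl fun y _ => by rw [hval y]

/-- **Proposition 4, putable bond (discrete optimal stopping).**
With reward `g(n) = K^p(n)` for `n < N` and `g(N) = max(F, K^p(N))`, the value `V(0, j)`
of the backward recursion is the greatest element of `{Val(τ) : τ adapted stopping rule}`: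
every adapted rule has value `≤ V(0, j)`, and some adapted rule attains it. -/
theorem putable_bond_optimal_stopping (m N : ℕ) (hm : 1 ≤ m) (hN : 1 ≤ N) (j : Fin m)
    (P : ℕ → Matrix (Fin m) (Fin m) ℝ)
    (hPnn : ∀ n < N, ∀ x y : Fin m, 0 ≤ P n x y)
    (hProw : ∀ n < N, ∀ x : Fin m, ∑ y : Fin m, P n x y = 1)
    (γ : Fin m → ℝ) (hγ : ∀ i, 0 ≤ γ i)
    (Kp : ℕ → ℝ) (F : ℝ)
    (g : ℕ → ℝ) (hg : ∀ n, g n = if n < N then Kp n else max F (Kp N)) :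
    (∀ τ : (Fin N → Fin m) → ℕ, AdaptedRule τ →
        ruleValue j P γ g τ ≤ snellPut N P γ Kp F N j) ∧
      (∃ τ : (Fin N → Fin m) → ℕ, AdaptedRule τ ∧
        ruleValue j P γ g τ = snellPut N P γ Kp F N j) := by
  exact putable_aux m γ hγ F N j P hPnn hProw Kp g hg
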